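/- Let q be a power of a prime p, let k, f be positive integers with f | k and k > f > 1, and let D = {x ∈ F_{q^k}^* : Tr_{q^f/q}(x^{(q^k-1)/(q^f-1)}) = 0}. Let χ₁ be the canonical additive character of F_{q^f} and let φ be a multiplicative character of F_{q^f}^* of order (q^f-1)/(q-1). Then for every b ∈ F_{q^k}^*, the Hamming weight w(c_b) = #{d ∈ D : Tr_{q^k/q}(b d) ≠ 0} satisfies (as an equality of complex numbers) w(c_b) = (q-1)q^{k-2}(q^f - q)/(q^f - 1) − ((-1)^{k/f-1} q^f (q-1)²/(q²(q^f-1))) · Σ_{j=1}^{(q^f-1)/(q-1) - 1} φ^j(-1) G(φ^j, χ₁)^{k/f - 1} conj(φ^j)(b^{(q^k-1)/(q^f-1)}). -/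

import Mathlib

open scoped BigOperators

set_option linter.unusedSectionVars false

namespace HD
open Polynomial Finset

section
variable {F : Type*} [Field F] [Fintype F]

theorem monics_finite (F : Type*) [Field F] [Fintype F] (n : ℕ) :
    {P : F[X] | P.Monic ∧ P.natDegree = n}.Finite := by
  have e := ((monicEquivDegreeLT (R := F) n).trans (degreeLTEquiv F n).toEquiv)
  have : Finite {P : F[X] | P.Monic ∧ P.natDegree = n} := Finite.of_equiv _ e.symm
  exact Set.toFinite _ 

/-- Monic polynomials of degree `n`. -/
noncomputable def M (F : Type*) [Field F] [Fintype F] (n : ℕ) : Finset F[X] :=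
  (monics_finite F n).toFinset

theorem mem_M {n : ℕ} {P : F[X]} : P ∈ M F n ↔ P.Monic ∧ P.natDegree = n := by
  simp [M]

/-- The multiplicative function on monic polynomials. -/
noncomputable def lam (χ : MulChar F ℂ) (ψ : AddChar F ℂ) (P : F[X]) : ℂ :=
  χ ((-1) ^ P.natDegree * P.coeff 0) * ψ (-P.nextCoeff)

theorem lam_one (χ : MulChar F ℂ) (ψ : AddChar F ℂ) : lam χ ψ 1 = 1 := by
  simp [lam, nextCoeff]

theorem lam_mul (χ : MulChar F ℂ) (ψ : AddChar F ℂ) {P Q : F[X]} (hP : P.Monic) (hQ : Q.Monic) :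
    lam χ ψ (P * Q) = lam χ ψ P * lam χ ψ Q := by
  unfold lam
  rw [hP.natDegree_mul hQ, hP.nextCoeff_mul hQ, mul_coeff_zero, neg_add, AddChar.map_add_eq_mul,
    pow_add, show ((-1 : F) ^ P.natDegree * (-1) ^ Q.natDegree * (P.coeff 0 * Q.coeff 0)) =
      ((-1) ^ P.natDegree * P.coeff 0) * ((-1) ^ Q.natDegree * Q.coeff 0) by ring, map_mul]
  ring

theorem lam_pow (χ : MulChar F ℂ) (ψ : AddChar F ℂ) {P : F[X]} (hP : P.Monic) (i : ℕ) :
    lam χ ψ (P ^ i) = lam χ ψ P ^ i := by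
  induction i with
  | zero => simp [lam_one]
  | succ i ih => rw [pow_succ, lam_mul χ ψ (hP.pow i) hP, ih, pow_succ]

noncomputable def A (χ : MulChar F ℂ) (ψ : AddChar F ℂ) (n : ℕ) : ℂ := ∑ P ∈ M F n, lam χ ψ P

theorem sum_M (n : ℕ) (g : F[X] → ℂ) (h : (Fin n → F) → ℂ)
    (H : ∀ P ∈ M F n, g P = h (fun i => P.coeff i)) : ∑ P ∈ M F n, g P = ∑ c, h c := by
  let e := ((monicEquivDegreeLT (R := F) n).trans (degreeLTEquiv F n).toEquiv)
  have he : ∀ P, e P = fun i : Fin n => P.1.coeff i := by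
    intro P
    funext i
    change (P.1.eraseLead).coeff i = _
    rw [eraseLead_coeff_of_ne]
    rw [P.2.2]; exact i.2.ne
  refine Finset.sum_bij (fun P hP => e ⟨P, mem_M.1 hP⟩) (by simp) ?_ ?_ ?_
  · intro a ha b hb hab
    simpa using e.injective hab
  · intro c _
    exact ⟨(e.symm c).1, mem_M.2 (e.symm c).2, by simp⟩
  · intro P hP
    rw [H P hP, he]

theorem A_zero (χ : MulChar F ℂ) (ψ : AddChar F ℂ) : A χ ψ 0 = 1 := by
  have : M F 0 = {1} := by
    ext P
    simp only [mem_M, mem_singleton]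
    constructor
    · rintro ⟨h1, h2⟩; exact h1.natDegree_eq_zero.1 h2
    · rintro rfl; simp
  rw [A, this, sum_singleton, lam_one]

theorem A_one (χ : MulChar F ℂ) (ψ : AddChar F ℂ) : A χ ψ 1 = gaussSum χ ψ := by
  rw [A, sum_M 1 _ (fun c => χ (-c 0) * ψ (-c 0))]
  · rw [gaussSum, ← Fintype.sum_equiv (Equiv.funUnique (Fin 1) F).symm (fun x => χ (-x) * ψ (-x)) _
      (fun x => by simp)]
    exact Fintype.sum_equiv (Equiv.neg F) _ _ (fun x => by simp)
  · intro P hP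
    obtain ⟨h1, h2⟩ := mem_M.1 hP
    simp [lam, nextCoeff, h2]

theorem A_two (χ : MulChar F ℂ) (hχ : χ ≠ 1) (ψ : AddChar F ℂ) (n : ℕ) : A χ ψ (n + 2) = 0 := by
  rw [A, sum_M (n + 2) _ (fun c => χ ((-1) ^ (n + 2) * c 0) * ψ (-c (Fin.last _)))]
  · rw [← Fintype.sum_equiv (Fin.consEquiv (fun _ : Fin (n + 2) => F))
      (fun x => χ ((-1) ^ (n + 2) * x.1) * ψ (-x.2 (Fin.last _))) _ (fun x => by
        rw [← Fin.succ_last]; simp [Fin.consEquiv])]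
    rw [Fintype.sum_prod_type]
    simp_rw [← Finset.mul_sum, map_mul]
    rw [← Finset.sum_mul, ← Finset.mul_sum, MulChar.sum_eq_zero_of_ne_one hχ]
    simp
  · intro P hP
    obtain ⟨h1, h2⟩ := mem_M.1 hP
    simp [lam, nextCoeff, h2]

open Classical in
noncomputable def Ir (F : Type*) [Field F] [Fintype F] (n : ℕ) : Finset F[X] :=
  (M F n).filter Irreducible

theorem mem_Ir {n : ℕ} {P : F[X]} : P ∈ Ir F n ↔ (P.Monic ∧ P.natDegree = n) ∧ Irreducible P := by
  simp [Ir, mem_M]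

noncomputable def S (χ : MulChar F ℂ) (ψ : AddChar F ℂ) (n : ℕ) : ℂ :=
  ∑ d ∈ n.divisors, ∑ P ∈ Ir F d, (d : ℂ) * lam χ ψ P ^ (n / d)

open Classical in
theorem natDegree_eq_sum {n : ℕ} {Q : F[X]} (hQ : Q ∈ M F n) :
    n = ∑ d ∈ Icc 1 n, ∑ i ∈ Icc 1 n, ∑ P ∈ Ir F d, if P ^ i ∣ Q then d else 0 := by
  obtain ⟨hm, hn⟩ := mem_M.1 hQ
  have hQ0 := hm.ne_zero
  have key : ∀ d ∈ Icc 1 n, ∀ P ∈ Ir F d, (∑ i ∈ Icc 1 n, if P ^ i ∣ Q then d else 0) =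
      (UniqueFactorizationMonoid.normalizedFactors Q).count P * P.natDegree := by
    intro d hd P hP
    obtain ⟨⟨h1, h2⟩, h3⟩ := mem_Ir.1 hP
    have hd1 := (Finset.mem_Icc.1 hd).1
    rw [← Finset.sum_filter, Finset.sum_const, smul_eq_mul, h2]
    congr 1
    have hiff : ∀ i, P ^ i ∣ Q ↔ i ≤ (UniqueFactorizationMonoid.normalizedFactors Q).count P := by
      intro i
      rw [pow_dvd_iff_le_emultiplicity,
        UniqueFactorizationMonoid.emultiplicity_eq_count_normalizedFactors h3 hQ0,
        h1.normalize_eq_self]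
      exact Nat.cast_le
    have hle : (UniqueFactorizationMonoid.normalizedFactors Q).count P ≤ n := by
      have := natDegree_le_of_dvd ((hiff _).2 le_rfl) hQ0
      rw [h1.natDegree_pow, h2, hn] at this
      nlinarith
    rw [show (Icc 1 n).filter (fun i => P ^ i ∣ Q) =
      Icc 1 ((UniqueFactorizationMonoid.normalizedFactors Q).count P) by
        ext i; simp only [mem_filter, mem_Icc, hiff]; omega]
    simp
  have hdeg : n = ((UniqueFactorizationMonoid.normalizedFactors Q).map natDegree).sum := by
    have h := leadingCoeff_mul_prod_normalizedFactors Q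
    rw [hm.leadingCoeff, C_1, one_mul] at h
    rw [← natDegree_multiset_prod, h, hn]
    exact UniqueFactorizationMonoid.zero_notMem_normalizedFactors Q
  rw [Finset.sum_multiset_map_count] at hdeg
  conv_lhs => rw [hdeg]
  have : ∀ d ∈ Icc 1 n, (∑ i ∈ Icc 1 n, ∑ P ∈ Ir F d, if P ^ i ∣ Q then d else 0) =
      ∑ P ∈ Ir F d, (UniqueFactorizationMonoid.normalizedFactors Q).count P * P.natDegree := by
    intro d hd
    rw [Finset.sum_comm]
    exact Finset.sum_congr rfl (key d hd)
  rw [Finset.sum_congr rfl this]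
  have hmaps : ∀ P ∈ (UniqueFactorizationMonoid.normalizedFactors Q).toFinset,
      P.natDegree ∈ Icc 1 n := by
    intro P hP
    rw [Multiset.mem_toFinset, Polynomial.mem_normalizedFactors_iff hQ0] at hP
    rw [mem_Icc]
    exact ⟨hP.1.natDegree_pos, hn ▸ natDegree_le_of_dvd hP.2.2 hQ0⟩
  rw [← Finset.sum_fiberwise_of_maps_to hmaps]
  refine Finset.sum_congr rfl fun d hd => ?_
  refine Finset.sum_subset ?_ ?_
  · intro P hP
    rw [mem_filter, Multiset.mem_toFinset, Polynomial.mem_normalizedFactors_iff hQ0] at hP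
    exact mem_Ir.2 ⟨⟨hP.1.2.1, hP.2⟩, hP.1.1⟩
  · intro P hP hP'
    have hP := mem_Ir.1 hP
    rw [mem_filter, Multiset.mem_toFinset, not_and'] at hP'
    rw [Multiset.count_eq_zero.2 (hP' hP.1.2), zero_smul]

open Classical in
theorem sum_dvd (χ : MulChar F ℂ) (ψ : AddChar F ℂ) {n d i : ℕ} {P : F[X]} (hP : P ∈ Ir F d) :
    (∑ Q ∈ M F n, if P ^ i ∣ Q then lam χ ψ Q else 0) =
      if d * i ≤ n then lam χ ψ P ^ i * A χ ψ (n - d * i) else 0 := by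
  obtain ⟨⟨h1, h2⟩, h3⟩ := mem_Ir.1 hP
  have hPi := h1.pow i
  have hdeg : (P ^ i).natDegree = d * i := by rw [h1.natDegree_pow, h2, mul_comm]
  split_ifs with h
  · rw [← Finset.sum_filter, A, Finset.mul_sum]
    symm
    refine Finset.sum_bij (fun R _ => P ^ i * R) ?_ ?_ ?_ ?_
    · intro R hR
      obtain ⟨r1, r2⟩ := mem_M.1 hR
      rw [mem_filter, mem_M]
      exact ⟨⟨hPi.mul r1, by rw [hPi.natDegree_mul r1, hdeg, r2]; omega⟩, dvd_mul_right _ _⟩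
    · intro a _ b _ hab
      exact mul_left_cancel₀ hPi.ne_zero hab
    · intro Q hQ
      rw [mem_filter, mem_M] at hQ
      obtain ⟨⟨q1, q2⟩, R, rfl⟩ := hQ
      have r1 := hPi.of_mul_monic_left q1
      refine ⟨R, mem_M.2 ⟨r1, ?_⟩, rfl⟩
      rw [hPi.natDegree_mul r1, hdeg] at q2
      omega
    · intro R hR
      rw [lam_mul χ ψ hPi (mem_M.1 hR).1, lam_pow χ ψ h1]
  · refine Finset.sum_eq_zero fun Q hQ => ?_
    obtain ⟨q1, q2⟩ := mem_M.1 hQ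
    rw [if_neg]
    intro hd
    have := natDegree_le_of_dvd hd q1.ne_zero
    omega

theorem newton (χ : MulChar F ℂ) (ψ : AddChar F ℂ) (n : ℕ) :
    (n : ℂ) * A χ ψ n = ∑ r ∈ Icc 1 n, S χ ψ r * A χ ψ (n - r) := by
  classical
  have h1 : (n : ℂ) * A χ ψ n = ∑ d ∈ Icc 1 n, ∑ i ∈ Icc 1 n,
      if d * i ≤ n then ∑ P ∈ Ir F d, (d : ℂ) * lam χ ψ P ^ i * A χ ψ (n - d * i) else 0 := by
    have : ∀ Q ∈ M F n, (n : ℂ) * lam χ ψ Q =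
        ∑ d ∈ Icc 1 n, ∑ i ∈ Icc 1 n, ∑ P ∈ Ir F d,
          (d : ℂ) * if P ^ i ∣ Q then lam χ ψ Q else 0 := by
      intro Q hQ
      conv_lhs => rw [natDegree_eq_sum hQ]
      push_cast
      simp_rw [Finset.sum_mul]
      refine Finset.sum_congr rfl fun d _ => Finset.sum_congr rfl fun i _ =>
        Finset.sum_congr rfl fun P _ => ?_
      split_ifs <;> simp
    rw [A, Finset.mul_sum, Finset.sum_congr rfl this, Finset.sum_comm]
    refine Finset.sum_congr rfl fun d _ => ?_
    rw [Finset.sum_comm]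
    refine Finset.sum_congr rfl fun i _ => ?_
    rw [Finset.sum_comm]
    simp_rw [← Finset.mul_sum]
    rw [Finset.sum_congr rfl fun P hP => by rw [sum_dvd χ ψ hP]]
    split_ifs with h
    · simp_rw [mul_assoc, Finset.mul_sum]
    · simp
  rw [h1, ← Finset.sum_product', ← Finset.sum_filter]
  have hmaps : ∀ x ∈ (Icc 1 n ×ˢ Icc 1 n).filter (fun x : ℕ × ℕ => x.1 * x.2 ≤ n),
      x.1 * x.2 ∈ Icc 1 n := by
    intro x hx
    simp only [mem_filter, mem_product, mem_Icc] at hx ⊢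
    exact ⟨Nat.mul_pos hx.1.1.1 hx.1.2.1, hx.2⟩
  rw [← Finset.sum_fiberwise_of_maps_to hmaps]
  refine Finset.sum_congr rfl fun r hr => ?_
  rw [mem_Icc] at hr
  rw [S, ← Nat.sum_divisorsAntidiagonal (f := fun d i => ∑ P ∈ Ir F d, (d : ℂ) * lam χ ψ P ^ i),
    Finset.sum_mul]
  have hset : ((Icc 1 n ×ˢ Icc 1 n).filter (fun x : ℕ × ℕ => x.1 * x.2 ≤ n)).filter
      (fun x => x.1 * x.2 = r) = r.divisorsAntidiagonal := by
    ext ⟨a, b⟩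
    simp only [mem_filter, mem_product, mem_Icc, Nat.mem_divisorsAntidiagonal]
    constructor
    · rintro ⟨_, h⟩; exact ⟨h, by omega⟩
    · rintro ⟨h, _⟩
      have ha : 0 < a := Nat.pos_of_ne_zero (by rintro rfl; omega)
      have hb : 0 < b := Nat.pos_of_ne_zero (by rintro rfl; omega)
      refine ⟨⟨⟨⟨ha, ?_⟩, ⟨hb, ?_⟩⟩, by omega⟩, h⟩ <;> nlinarith
  rw [hset]
  refine Finset.sum_congr rfl fun x hx => ?_
  rw [(Nat.mem_divisorsAntidiagonal.1 hx).1, Finset.sum_mul]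

theorem S_eq (χ : MulChar F ℂ) (hχ : χ ≠ 1) (ψ : AddChar F ℂ) (n : ℕ) :
    S χ ψ (n + 1) = (-1) ^ n * gaussSum χ ψ ^ (n + 1) := by
  induction n with
  | zero =>
    have := newton χ ψ 1
    simp [A_zero, A_one] at this
    simp [this]
  | succ n ih =>
    have := newton χ ψ (n + 2)
    rw [A_two χ hχ, mul_zero, Finset.sum_Icc_succ_top (by omega),
      Finset.sum_Icc_succ_top (by omega), Finset.sum_eq_zero] at this
    · rw [show n + 1 + 1 - (n + 1) = 1 by omega, Nat.sub_self, A_one, A_zero, ih] at this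
      linear_combination -this
    · intro r hr
      rw [mem_Icc] at hr
      rw [show n + 2 - r = (n - r) + 2 by omega, A_two χ hχ, mul_zero]

theorem lift_eq_S {K : Type*} [Field K] [Fintype K] [Algebra F K] (χ : MulChar F ℂ)
    (ψ : AddChar F ℂ) :
    ∑ x : K, χ (Algebra.norm F x) * ψ (Algebra.trace F K x) = S χ ψ (Module.finrank F K) := by
  classical
  have hval : ∀ x : K, χ (Algebra.norm F x) * ψ (Algebra.trace F K x) =
      lam χ ψ (minpoly F x) ^ (Module.finrank F K / (minpoly F x).natDegree) := by
    intro x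
    have hx : IsIntegral F x := .of_finite F x
    have hd : Module.finrank (IntermediateField.adjoin F {x}) K =
        Module.finrank F K / (minpoly F x).natDegree := by
      rw [← IntermediateField.adjoin.finrank hx, ← Module.finrank_mul_finrank F
        (IntermediateField.adjoin F {x}) K, Nat.mul_div_cancel_left _ Module.finrank_pos]
    have hn : Algebra.norm F (IntermediateField.AdjoinSimple.gen F x) =
        (-1) ^ (minpoly F x).natDegree * (minpoly F x).coeff 0 := by
      have := Algebra.PowerBasis.norm_gen_eq_coeff_zero_minpoly
        (IntermediateField.adjoin.powerBasis hx)
      rw [IntermediateField.adjoin.powerBasis_gen, IntermediateField.minpoly_gen] at this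
      rw [this, IntermediateField.adjoin.powerBasis_dim]
    rw [Algebra.norm_eq_norm_adjoin, trace_eq_finrank_mul_minpoly_nextCoeff, hd, hn, map_pow,
      ← nsmul_eq_mul, AddChar.map_nsmul_eq_pow, lam, mul_pow]
  have hpos : 0 < Module.finrank F K := Module.finrank_pos
  have hmaps : ∀ x ∈ (univ : Finset K), (minpoly F x).natDegree ∈ (Module.finrank F K).divisors := by
    intro x _
    rw [Nat.mem_divisors]
    refine ⟨?_, hpos.ne'⟩
    rw [← IntermediateField.adjoin.finrank (.of_finite F x)]
    exact ⟨_, (Module.finrank_mul_finrank F (IntermediateField.adjoin F {x}) K).symm⟩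
  rw [Finset.sum_congr rfl fun x _ => hval x, ← Finset.sum_fiberwise_of_maps_to hmaps, S]
  refine Finset.sum_congr rfl fun d hd => ?_
  have hmaps2 : ∀ x ∈ (univ : Finset K).filter (fun x => (minpoly F x).natDegree = d),
      minpoly F x ∈ Ir F d := by
    intro x hx
    have hi : IsIntegral F x := .of_finite F x
    exact mem_Ir.2 ⟨⟨minpoly.monic hi, (mem_filter.1 hx).2⟩, minpoly.irreducible hi⟩
  rw [← Finset.sum_fiberwise_of_maps_to hmaps2]
  refine Finset.sum_congr rfl fun P hP => ?_
  obtain ⟨⟨h1, h2⟩, h3⟩ := mem_Ir.1 hP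
  rw [Finset.sum_congr rfl (g := fun _ => lam χ ψ P ^ (Module.finrank F K / d))]
  swap
  · intro x hx
    rw [mem_filter] at hx
    rw [hx.2, h2]
  rw [Finset.sum_const, nsmul_eq_mul]
  congr 2
  have hsplit : (P.map (algebraMap F K)).Splits := by
    have hdvd : P ∣ X ^ (Nat.card F) ^ (Module.finrank F K) - X :=
      h3.natDegree_dvd_iff_dvd_X_pow_card_pow_sub_X.1 (h2 ▸ (Nat.mem_divisors.1 hd).1)
    have hc : (Nat.card F) ^ (Module.finrank F K) = Fintype.card K := by
      rw [Module.card_eq_pow_finrank (K := F), Nat.card_eq_fintype_card]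
    rw [hc] at hdvd
    refine (FiniteField.isSplittingField_sub K F).splits.of_dvd ?_ (Polynomial.map_dvd _ hdvd)
    exact Polynomial.map_ne_zero (FiniteField.X_pow_card_sub_X_ne_zero _ Fintype.one_lt_card)
  have hcard := card_rootSet_eq_natDegree (PerfectField.separable_of_irreducible h3) hsplit
  rw [h2] at hcard
  rw [← hcard, ← Set.toFinset_card]
  congr 1
  ext x
  rw [mem_filter, mem_filter, Set.mem_toFinset, mem_rootSet]
  constructor
  · rintro ⟨_, rfl⟩
    exact ⟨h1.ne_zero, minpoly.aeval F x⟩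
  · rintro ⟨_, hx⟩
    have := minpoly.eq_of_irreducible_of_monic h3 hx h1
    exact ⟨⟨mem_univ _, by rw [← this, h2, Set.toFinset_card, hcard]⟩, this.symm⟩

/-- Hasse-Davenport lifting relation. -/
theorem hasse_davenport {K : Type*} [Field K] [Fintype K] [Algebra F K] (χ : MulChar F ℂ)
    (hχ : χ ≠ 1) (ψ : AddChar F ℂ) :
    ∑ x : K, χ (Algebra.norm F x) * ψ (Algebra.trace F K x) =
      (-1) ^ (Module.finrank F K - 1) * gaussSum χ ψ ^ (Module.finrank F K) := by
  have hpos : 0 < Module.finrank F K := Module.finrank_pos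
  rw [lift_eq_S]
  obtain ⟨n, hn⟩ := Nat.exists_eq_succ_of_ne_zero hpos.ne'
  rw [hn, S_eq χ hχ]
  rfl

end
end HD
namespace HD
open Finset

theorem exists_addChar (p : ℕ) [Fact p.Prime]
    (Fq Ff : Type) [Field Fq] [Field Ff] [Fintype Fq] [Fintype Ff]
    [Algebra Fq Ff] [Algebra (ZMod p) Ff] (χ₁ : AddChar Ff ℂ)
    (hχ₁ : ∀ x : Ff, χ₁ x =
      Complex.exp (2 * Real.pi * Complex.I * ((Algebra.trace (ZMod p) Ff x).val : ℂ) / p)) :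
    ∃ ψ₀ : AddChar Fq ℂ, ψ₀ ≠ 1 ∧ ∀ x, χ₁ x = ψ₀ (Algebra.trace Fq Ff x) := by
  have : CharP Ff p := by rw [← Algebra.charP_iff (ZMod p) Ff p]; exact ZMod.charP p
  have : CharP Fq p := by rwa [Algebra.charP_iff Fq Ff p]
  let _ : Algebra (ZMod p) Fq := ZMod.algebra _ _
  have : IsScalarTower (ZMod p) Fq Ff := IsScalarTower.of_algebraMap_eq' (Subsingleton.elim _ _)
  refine ⟨(ZMod.stdAddChar (N := p)).compAddMonoidHom (Algebra.trace (ZMod p) Fq).toAddMonoidHom,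
    ?_, ?_⟩
  · obtain ⟨a, ha⟩ := DFunLike.ne_iff.1 (Algebra.trace_ne_zero (ZMod p) Fq)
    intro h
    have h2 := DFunLike.congr_fun h a
    apply ha
    apply ZMod.injective_stdAddChar
    rw [LinearMap.zero_apply, AddChar.map_zero_eq_one]
    exact h2
  · intro x
    rw [hχ₁]
    change _ = ZMod.stdAddChar (Algebra.trace (ZMod p) Fq (Algebra.trace Fq Ff x))
    rw [Algebra.trace_trace, ZMod.stdAddChar_apply, ZMod.toCircle_apply]

theorem mem_range_of_pow {Fq Ff : Type} [Field Fq] [Field Ff] [Fintype Fq] [Fintype Ff]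
    [Algebra Fq Ff] (u : Ff) (hu : u ^ Fintype.card Fq = u) : ∃ y : Fq, algebraMap Fq Ff y = u := by
  have h := (IsGalois.mem_range_algebraMap_iff_fixed (F := Fq) u).2 ?_
  · exact h
  intro σ
  obtain ⟨i, rfl⟩ := (FiniteField.bijective_frobeniusAlgEquivOfAlgebraic_pow Fq Ff).2 σ
  have : ∀ n : ℕ, ((FiniteField.frobeniusAlgEquivOfAlgebraic Fq Ff) ^ n) u = u := by
    intro n
    induction n with
    | zero => simp
    | succ n ih =>
      rw [pow_succ', AlgEquiv.mul_apply, ih]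
      simpa using hu
  exact this _

/-- The kernel of `φ` is `Fq`. -/
theorem phi_eq_one_iff {Fq Ff : Type} [Field Fq] [Field Ff] [Fintype Fq] [Fintype Ff]
    [Algebra Fq Ff] (N : ℕ)
    (hN : N * (Fintype.card Fq - 1) = Fintype.card Ff - 1)
    (φ : MulChar Ff ℂ) (hφ : orderOf φ = N) (u : Ff) (hu : u ≠ 0) :
    φ u = 1 ↔ ∃ y : Fq, algebraMap Fq Ff y = u := by
  classical
  have hq1 : 0 < Fintype.card Fq - 1 := by
    have := Fintype.one_lt_card (α := Fq); omega
  obtain ⟨g, hg⟩ := IsCyclic.exists_generator (α := Ffˣ)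
  have hog : orderOf g = N * (Fintype.card Fq - 1) := by
    rw [orderOf_eq_card_of_forall_mem_zpowers hg, Nat.card_eq_fintype_card, Fintype.card_units, hN]
  have hord : ∀ n : ℕ, φ g ^ n = 1 ↔ N ∣ n := by
    intro n
    rw [← hφ, orderOf_dvd_iff_pow_eq_one, ← MulChar.pow_apply_coe, MulChar.eq_iff hg,
      MulChar.one_apply_coe]
  obtain ⟨i, hi⟩ := (Submonoid.mem_powers_iff _ _).1
    (mem_powers_iff_mem_zpowers.2 (hg (Units.mk0 u hu)))
  have hui : u = (g : Ff) ^ i := by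
    have := congrArg Units.val hi
    simpa using this.symm
  have h1 : φ u = 1 ↔ N ∣ i := by rw [hui, map_pow, hord]
  have h2 : u ^ (Fintype.card Fq - 1) = 1 ↔ N ∣ i := by
    rw [hui, ← pow_mul, ← Units.val_pow_eq_pow_val, Units.val_eq_one, ← orderOf_dvd_iff_pow_eq_one,
      hog]
    exact Nat.mul_dvd_mul_iff_right hq1
  rw [h1, ← h2]
  constructor
  · intro h
    apply mem_range_of_pow
    rw [show Fintype.card Fq = (Fintype.card Fq - 1) + 1 by omega, pow_succ, h, one_mul]
  · rintro ⟨y, rfl⟩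
    rw [← map_pow, FiniteField.pow_card_sub_one_eq_one y (by rintro rfl; simp at hu), map_one]

open Classical in
theorem sum_phi {Fq Ff : Type} [Field Fq] [Field Ff] [Fintype Fq] [Fintype Ff]
    [Algebra Fq Ff] (N : ℕ)
    (hN : N * (Fintype.card Fq - 1) = Fintype.card Ff - 1)
    (φ : MulChar Ff ℂ) (hφ : orderOf φ = N) (g : Ff → ℂ) :
    ∑ u : Ff, (∑ j ∈ range N, (φ ^ j) u) * g u =
      N * ∑ y ∈ univ.filter (fun y : Fq => y ≠ 0), g (algebraMap Fq Ff y) := by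
  have hinj := (algebraMap Fq Ff).injective
  rw [← Finset.sum_image (f := g) (g := algebraMap Fq Ff) hinj.injOn, Finset.mul_sum]
  symm
  have hpt : ∀ u : Ff, (∑ j ∈ range N, (φ ^ j) u) =
      if u ∈ (univ.filter (fun y : Fq => y ≠ 0)).image (algebraMap Fq Ff) then (N : ℂ) else 0 := by
    intro u
    by_cases hu : u = 0
    · subst hu
      rw [if_neg, Finset.sum_eq_zero]
      · intro j _
        exact MulChar.map_zero _
      · simp
    have hp : ∀ j, (φ ^ j) u = φ u ^ j := fun j => MulChar.pow_apply_coe φ j (Units.mk0 u hu)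
    simp_rw [hp]
    have hiff := phi_eq_one_iff (Fq := Fq) N hN φ hφ u hu
    split_ifs with h
    · obtain ⟨y, _, hy⟩ := Finset.mem_image.1 h
      rw [hiff.2 ⟨y, hy⟩]
      simp
    · have hne : φ u ≠ 1 := by
        intro h1
        obtain ⟨y, hy⟩ := hiff.1 h1
        refine h (Finset.mem_image.2 ⟨y, ?_, hy⟩)
        simp only [mem_filter, mem_univ, true_and]
        rintro rfl
        exact hu (by rw [← hy, map_zero])
      rw [geom_sum_eq hne, ← hp, ← hφ, pow_orderOf_eq_one]
      rw [show (1 : MulChar Ff ℂ) u = 1 from MulChar.one_apply (Ne.isUnit hu)]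
      simp
  simp_rw [hpt, ite_mul, zero_mul]
  rw [Finset.sum_ite_mem, univ_inter]

open Classical in
theorem trace_indicator {Fq Ff : Type} [Field Fq] [Field Ff] [Fintype Fq] [Fintype Ff]
    [Algebra Fq Ff] (N : ℕ) (hN0 : 0 < N)
    (hN : N * (Fintype.card Fq - 1) = Fintype.card Ff - 1)
    (φ : MulChar Ff ℂ) (hφ : orderOf φ = N) (χ₁ : AddChar Ff ℂ) (hχ1 : χ₁ ≠ 1)
    (ψ₀ : AddChar Fq ℂ) (hψ₀ : ψ₀ ≠ 1) (hχ : ∀ x, χ₁ x = ψ₀ (Algebra.trace Fq Ff x))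
    (z : Ff) (hz : z ≠ 0) :
    (N : ℂ) * Fintype.card Fq * (if Algebra.trace Fq Ff z = 0 then 1 else 0) =
      (N - 1) + ∑ j ∈ Icc 1 (N - 1), gaussSum (φ ^ j) χ₁ * (φ ^ j)⁻¹ z := by
  have h1 := AddChar.sum_mulShift (Algebra.trace Fq Ff z) (AddChar.IsPrimitive.of_ne_one hψ₀)
  have h2 : ∀ y : Fq, ψ₀ (y * Algebra.trace Fq Ff z) = χ₁ (algebraMap Fq Ff y * z) := by
    intro y
    rw [hχ, ← Algebra.smul_def, map_smul, smul_eq_mul]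
  simp_rw [h2] at h1
  have h3 := sum_phi (Fq := Fq) N hN φ hφ (fun u => χ₁ (z * u))
  have h4 : ∑ y : Fq, χ₁ (algebraMap Fq Ff y * z) =
      1 + ∑ y ∈ univ.filter (fun y : Fq => y ≠ 0), χ₁ (z * algebraMap Fq Ff y) := by
    rw [Finset.filter_ne', ← Finset.add_sum_erase univ _ (mem_univ (0 : Fq))]
    simp [mul_comm]
  have h5 : ∑ u : Ff, (∑ j ∈ range N, (φ ^ j) u) * χ₁ (z * u) =
      ∑ j ∈ range N, gaussSum (φ ^ j) χ₁ * (φ ^ j)⁻¹ z := by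
    simp_rw [Finset.sum_mul]
    rw [Finset.sum_comm]
    refine Finset.sum_congr rfl fun j _ => ?_
    have := gaussSum_mulShift_eq (φ ^ j) χ₁ (Units.mk0 z hz)
    rw [Units.val_mk0] at this
    rw [mul_comm, ← this]
    rfl
  have h6 : ∑ j ∈ range N, gaussSum (φ ^ j) χ₁ * (φ ^ j)⁻¹ z =
      -1 + ∑ j ∈ Icc 1 (N - 1), gaussSum (φ ^ j) χ₁ * (φ ^ j)⁻¹ z := by
    rw [show range N = insert 0 (Icc 1 (N - 1)) by ext i; simp; omega, Finset.sum_insert (by simp),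
      pow_zero, gaussSum_one_left hχ1, inv_one, MulChar.one_apply (Ne.isUnit hz)]
    ring
  rw [h5, h6] at h3
  rw [h4] at h1
  have h7 : (Fintype.card Fq : ℂ) * (if Algebra.trace Fq Ff z = 0 then 1 else 0) =
      ((if Algebra.trace Fq Ff z = 0 then Fintype.card Fq else 0 : ℕ) : ℂ) := by
    split_ifs <;> simp
  rw [mul_assoc, h7, ← h1]
  linear_combination -h3

/-- Twisted lifting relation. -/
theorem hd_shift {F K : Type} [Field F] [Fintype F] [Field K] [Fintype K] [Algebra F K]
    (χ : MulChar F ℂ) (hχ : χ ≠ 1) (ψ : AddChar F ℂ) (b : K) (hb : b ≠ 0) :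
    ∑ x : K, χ (Algebra.norm F x) * ψ (Algebra.trace F K (b * x)) =
      χ⁻¹ (Algebra.norm F b) *
        ((-1) ^ (Module.finrank F K - 1) * gaussSum χ ψ ^ (Module.finrank F K)) := by
  rw [← hasse_davenport (K := K) χ hχ ψ, Finset.mul_sum]
  refine Fintype.sum_equiv (Equiv.mulLeft₀ b hb) _ _ fun x => ?_
  have hn : Algebra.norm F b ≠ 0 := Algebra.norm_ne_zero_iff.2 hb
  simp only [Equiv.mulLeft₀_apply, map_mul]
  rw [MulChar.inv_apply_eq_inv']
  have : χ (Algebra.norm F b) ≠ 0 := by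
    intro h; exact (Ne.isUnit hn).map χ |>.ne_zero h
  field_simp

end HD

namespace HD
open Finset

section
variable {Fq Ff Fk : Type} [Field Fq] [Field Ff] [Field Fk]
    [Fintype Fq] [Fintype Ff] [Fintype Fk]
    [Algebra Fq Ff] [Algebra Ff Fk] [Algebra Fq Fk] [IsScalarTower Fq Ff Fk]

open Classical in
/-- indicator of the defining set -/
noncomputable def ind (Fq Ff : Type) {Fk : Type} [Field Fq] [Field Ff] [Field Fk]
    [Algebra Fq Ff] [Algebra Ff Fk] (d : Fk) : ℂ :=
  if d ≠ 0 ∧ Algebra.trace Fq Ff (Algebra.norm Ff d) = 0 then 1 else 0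

theorem ind_smul (y : Fq) (hy : y ≠ 0) (d : Fk) :
    ind Fq Ff (algebraMap Fq Fk y * d) = ind Fq Ff d := by
  unfold ind
  congr 1
  have hy' : algebraMap Fq Fk y ≠ 0 := by simpa using hy
  have h : Algebra.trace Fq Ff (Algebra.norm Ff (algebraMap Fq Fk y * d)) =
      y ^ Module.finrank Ff Fk * Algebra.trace Fq Ff (Algebra.norm Ff d) := by
    rw [map_mul, IsScalarTower.algebraMap_apply Fq Ff Fk, Algebra.norm_algebraMap, ← map_pow,
      ← Algebra.smul_def, map_smul, smul_eq_mul]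
  rw [h]
  simp [hy, hy']

/-- the weight in terms of character sums -/
theorem weight_eq (ψ₀ : AddChar Fq ℂ) (hψ₀ : ψ₀ ≠ 1) (b : Fk) :
    (Fintype.card Fq : ℂ) *
      (Nat.card {d : Fk // (d ≠ 0 ∧ Algebra.trace Fq Ff (Algebra.norm Ff d) = 0) ∧
        Algebra.trace Fq Fk (b * d) ≠ 0} : ℂ) =
    ((Fintype.card Fq : ℂ) - 1) * (∑ d : Fk, ind Fq Ff d -
      ∑ d : Fk, ind Fq Ff d * ψ₀ (Algebra.trace Fq Fk (b * d))) := by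
  classical
  have h1 : (Nat.card {d : Fk // (d ≠ 0 ∧ Algebra.trace Fq Ff (Algebra.norm Ff d) = 0) ∧
        Algebra.trace Fq Fk (b * d) ≠ 0} : ℂ) =
      ∑ d : Fk, ind Fq Ff d * (1 - if Algebra.trace Fq Fk (b * d) = 0 then 1 else 0) := by
    rw [Nat.card_eq_fintype_card, Fintype.card_subtype, Finset.card_filter]
    push_cast
    refine Finset.sum_congr rfl fun d _ => ?_
    unfold ind
    by_cases h : d ≠ 0 ∧ Algebra.trace Fq Ff (Algebra.norm Ff d) = 0 <;>
      by_cases h' : Algebra.trace Fq Fk (b * d) = 0 <;> simp [h, h']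
  have h2 : ∀ d : Fk, (Fintype.card Fq : ℂ) *
      (if Algebra.trace Fq Fk (b * d) = 0 then 1 else 0) =
      ∑ y : Fq, ψ₀ (y * Algebra.trace Fq Fk (b * d)) := by
    intro d
    rw [AddChar.sum_mulShift _ (AddChar.IsPrimitive.of_ne_one hψ₀)]
    split_ifs <;> simp
  have h3 : ∀ y : Fq, y ≠ 0 → ∑ d : Fk, ind Fq Ff d * ψ₀ (y * Algebra.trace Fq Fk (b * d)) =
      ∑ d : Fk, ind Fq Ff d * ψ₀ (Algebra.trace Fq Fk (b * d)) := by
    intro y hy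
    have hy' : algebraMap Fq Fk y ≠ 0 := by simpa using hy
    refine Fintype.sum_equiv (Equiv.mulLeft₀ _ hy') _ _ fun d => ?_
    rw [Equiv.mulLeft₀_apply, ind_smul y hy, mul_left_comm, ← Algebra.smul_def, map_smul,
      smul_eq_mul]
  have h4 : ∑ d : Fk, ind Fq Ff d * ((Fintype.card Fq : ℂ) *
      (if Algebra.trace Fq Fk (b * d) = 0 then 1 else 0)) =
      ∑ d : Fk, ind Fq Ff d + ((Fintype.card Fq : ℂ) - 1) *
        ∑ d : Fk, ind Fq Ff d * ψ₀ (Algebra.trace Fq Fk (b * d)) := by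
    simp_rw [h2, Finset.mul_sum]
    rw [Finset.sum_comm, ← Finset.add_sum_erase univ _ (mem_univ (0 : Fq)),
      Finset.sum_congr rfl fun y hy => h3 y (Finset.ne_of_mem_erase hy), Finset.sum_const,
      Finset.card_erase_of_mem (mem_univ _), Finset.card_univ, nsmul_eq_mul,
      Nat.cast_sub Fintype.card_pos, ← Finset.mul_sum]
    simp
  have h5 : (Fintype.card Fq : ℂ) * ∑ d : Fk, ind Fq Ff d *
      (1 - if Algebra.trace Fq Fk (b * d) = 0 then 1 else 0) =
      Fintype.card Fq * ∑ d : Fk, ind Fq Ff d - ∑ d : Fk, ind Fq Ff d * ((Fintype.card Fq : ℂ) *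
      (if Algebra.trace Fq Fk (b * d) = 0 then 1 else 0)) := by
    rw [Finset.mul_sum, Finset.mul_sum, ← Finset.sum_sub_distrib]
    refine Finset.sum_congr rfl fun d _ => ?_
    ring
  rw [h1, h5, h4]
  ring

theorem sum_ind (N : ℕ) (hN0 : 0 < N)
    (hN : N * (Fintype.card Fq - 1) = Fintype.card Ff - 1)
    (φ : MulChar Ff ℂ) (hφ : orderOf φ = N) (χ₁ : AddChar Ff ℂ) (hχ1 : χ₁ ≠ 1)
    (ψ₀ : AddChar Fq ℂ) (hψ₀ : ψ₀ ≠ 1) (hχ : ∀ x, χ₁ x = ψ₀ (Algebra.trace Fq Ff x))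
    (ψ : AddChar Ff ℂ) (b : Fk) (hb : b ≠ 0) :
    (N : ℂ) * Fintype.card Fq * ∑ d : Fk, ind Fq Ff d * ψ (Algebra.trace Ff Fk (b * d)) =
      (N - 1) * (∑ d : Fk, ψ (Algebra.trace Ff Fk d) - 1) +
      ∑ j ∈ Icc 1 (N - 1), gaussSum (φ ^ j) χ₁ * ((φ ^ j) (Algebra.norm Ff b) *
        ((-1) ^ (Module.finrank Ff Fk - 1) *
          gaussSum (φ ^ j)⁻¹ ψ ^ (Module.finrank Ff Fk))) := by
  classical
  have hne : ∀ j ∈ Icc 1 (N - 1), (φ ^ j)⁻¹ ≠ 1 := by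
    intro j hj h
    rw [mem_Icc] at hj
    rw [inv_eq_one, ← orderOf_dvd_iff_pow_eq_one, hφ] at h
    have := Nat.le_of_dvd hj.1 h
    omega
  have h1 : ∀ d : Fk, (N : ℂ) * Fintype.card Fq * (ind Fq Ff d * ψ (Algebra.trace Ff Fk (b * d))) =
      (N - 1) * (ψ (Algebra.trace Ff Fk (b * d)) - if d = 0 then 1 else 0) +
      ∑ j ∈ Icc 1 (N - 1), gaussSum (φ ^ j) χ₁ *
        ((φ ^ j)⁻¹ (Algebra.norm Ff d) * ψ (Algebra.trace Ff Fk (b * d))) := by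
    intro d
    by_cases hd : d = 0
    · subst hd
      have h0 : ∀ j : ℕ, (φ ^ j)⁻¹ (0 : Ff) = 0 := fun j => MulChar.map_zero _
      have h0' : Algebra.norm Ff (0 : Fk) = 0 := Algebra.norm_zero
      simp only [h0', h0, ind]
      simp
    · have hn : Algebra.norm Ff d ≠ 0 := Algebra.norm_ne_zero_iff.2 hd
      have h := trace_indicator N hN0 hN φ hφ χ₁ hχ1 ψ₀ hψ₀ hχ _ hn
      have hi : ind Fq Ff d = if Algebra.trace Fq Ff (Algebra.norm Ff d) = 0 then 1 else 0 := by
        simp [ind, hd]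
      simp_rw [← mul_assoc]
      rw [hi, h, if_neg hd, ← Finset.sum_mul]
      ring
  rw [Finset.mul_sum, Finset.sum_congr rfl fun d _ => h1 d, Finset.sum_add_distrib,
    ← Finset.mul_sum, Finset.sum_sub_distrib]
  congr 1
  · congr 2
    · exact Fintype.sum_equiv (Equiv.mulLeft₀ b hb) _ _ fun d => rfl
    · simp
  · rw [Finset.sum_comm]
    refine Finset.sum_congr rfl fun j hj => ?_
    rw [← Finset.mul_sum, hd_shift _ (hne j hj) ψ b hb, inv_inv]

theorem sum_flip (N : ℕ) (φ : MulChar Ff ℂ) (hφ : orderOf φ = N) (χ₁ : AddChar Ff ℂ)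
    (hχ1 : χ₁ ≠ 1) (m : ℕ) (hm : 0 < m) (z : Ff) :
    ∑ j ∈ Icc 1 (N - 1), gaussSum (φ ^ j) χ₁ * ((φ ^ j) z *
        ((-1) ^ (m - 1) * gaussSum (φ ^ j)⁻¹ χ₁ ^ m)) =
    (-1) ^ (m - 1) * Fintype.card Ff * ∑ j ∈ Icc 1 (N - 1),
      (φ ^ j) (-1) * gaussSum (φ ^ j) χ₁ ^ (m - 1) * (starRingEnd ℂ) ((φ ^ j) z) := by
  rw [Finset.mul_sum]
  have hinv : ∀ j ∈ Icc 1 (N - 1), φ ^ (N - j) = (φ ^ j)⁻¹ := by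
    intro j hj
    rw [mem_Icc] at hj
    rw [eq_inv_iff_mul_eq_one, ← pow_add, Nat.sub_add_cancel (by omega), ← hφ, pow_orderOf_eq_one]
  refine Finset.sum_nbij' (fun j => N - j) (fun j => N - j) ?_ ?_ ?_ ?_ ?_
  · intro j hj; simp only [mem_Icc] at hj ⊢; omega
  · intro j hj; simp only [mem_Icc] at hj ⊢; omega
  · intro j hj; simp only [mem_Icc] at hj ⊢; omega
  · intro j hj; simp only [mem_Icc] at hj ⊢; omega
  intro j hj
  rw [hinv j hj]
  have hne : φ ^ j ≠ 1 := by
    intro h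
    rw [mem_Icc] at hj
    rw [← orderOf_dvd_iff_pow_eq_one, hφ] at h
    have := Nat.le_of_dvd hj.1 h
    omega
  generalize φ ^ j = η at *
  have h1 := gaussSum_mul_gaussSum_eq_card hne (AddChar.IsPrimitive.of_ne_one hχ1)
  have h2 := mul_gaussSum_inv_eq_gaussSum η⁻¹ χ₁
  have h3 : (starRingEnd ℂ) (η⁻¹ z) = η z := by
    have := MulChar.star_apply' η⁻¹ z
    rw [inv_inv] at this
    exact this
  rw [h3]
  have hG : gaussSum η⁻¹ χ₁ ^ m = gaussSum η⁻¹ χ₁ * gaussSum η⁻¹ χ₁ ^ (m - 1) := by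
    rw [← pow_succ', Nat.sub_add_cancel hm]
  have h4 : gaussSum η χ₁ * gaussSum η⁻¹ χ₁ = η⁻¹ (-1) * Fintype.card Ff := by
    rw [← h1, ← h2]; ring
  rw [hG]
  linear_combination η z * (-1) ^ (m - 1) * gaussSum η⁻¹ χ₁ ^ (m - 1) * h4

end
end HD

/-- **Theorem 1, weight formula.** Let `q` be a power of a prime `p`,
`f ∣ k`, `k > f > 1`, and `D = {x ∈ F_{q^k}ˣ : Tr_{q^f/q}(x^{(q^k-1)/(q^f-1)}) = 0}`.
Let `χ₁` be the canonical additive character of `F_{q^f}` and `φ` a multiplicative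
character of `F_{q^f}ˣ` of order `(q^f-1)/(q-1)`.  Then for every `b ∈ F_{q^k}ˣ` the
Hamming weight `w(c_b) = #{d ∈ D : Tr_{q^k/q}(bd) ≠ 0}` satisfies, in `ℂ`,
`w(c_b) = (q-1)q^{k-2}(q^f-q)/(q^f-1) − ((-1)^{k/f-1} q^f(q-1)²/(q²(q^f-1))) ·
  ∑_{j=1}^{(q^f-1)/(q-1)-1} φ^j(-1) G(φ^j,χ₁)^{k/f-1} conj(φ^j)(b^{(q^k-1)/(q^f-1)})`.
Here `x^{(q^k-1)/(q^f-1)}` is the norm from `Fk` to `Ff` (hypothesis `hnorm`). -/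
theorem stmt4 (p e q f k : ℕ) [Fact p.Prime] (he : 0 < e) (hq : q = p ^ e)
    (hf : 1 < f) (hk : f < k) (hfk : f ∣ k)
    (Fq Ff Fk : Type) [Field Fq] [Field Ff] [Field Fk]
    [Fintype Fq] [Fintype Ff] [Fintype Fk]
    [Algebra Fq Ff] [Algebra Ff Fk] [Algebra Fq Fk] [IsScalarTower Fq Ff Fk]
    [Algebra (ZMod p) Ff]
    (hcq : Fintype.card Fq = q) (hcf : Fintype.card Ff = q ^ f)
    (hck : Fintype.card Fk = q ^ k)
    (hnorm : ∀ x : Fk,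
      algebraMap Ff Fk (Algebra.norm Ff x) = x ^ ((q ^ k - 1) / (q ^ f - 1)))
    (χ₁ : AddChar Ff ℂ)
    (hχ₁ : ∀ x : Ff, χ₁ x =
      Complex.exp (2 * Real.pi * Complex.I * ((Algebra.trace (ZMod p) Ff x).val : ℂ) / p))
    (φ : MulChar Ff ℂ) (hφ : orderOf φ = (q ^ f - 1) / (q - 1))
    (b : Fk) (hb : b ≠ 0) :
    (Nat.card {d : Fk // (d ≠ 0 ∧ Algebra.trace Fq Ff (Algebra.norm Ff d) = 0) ∧
        Algebra.trace Fq Fk (b * d) ≠ 0} : ℂ)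
      = ((q : ℂ) - 1) * (q : ℂ) ^ (k - 2) * ((q : ℂ) ^ f - q) / ((q : ℂ) ^ f - 1) -
        (-1 : ℂ) ^ (k / f - 1) * (q : ℂ) ^ f * ((q : ℂ) - 1) ^ 2 /
            ((q : ℂ) ^ 2 * ((q : ℂ) ^ f - 1)) *
          ∑ j ∈ Finset.Icc 1 ((q ^ f - 1) / (q - 1) - 1),
            (φ ^ j) (-1) * gaussSum (φ ^ j) χ₁ ^ (k / f - 1) *
              (starRingEnd ℂ) ((φ ^ j) (Algebra.norm Ff b)) := by
  classical
  have hp := (Fact.out : p.Prime)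
  have hq1 : 1 < q := by rw [hq]; exact Nat.one_lt_pow he.ne' hp.one_lt
  have hQ1 : 1 < q ^ f := Nat.one_lt_pow (by omega) hq1
  set N := (q ^ f - 1) / (q - 1) with hNdef
  have hN : N * (q - 1) = q ^ f - 1 :=
    Nat.div_mul_cancel (by simpa using Nat.sub_dvd_pow_sub_pow q 1 f)
  have hN0 : 0 < N := by
    rcases Nat.eq_zero_or_pos N with h | h
    · rw [h] at hN; omega
    · exact h
  have hN' : N * (Fintype.card Fq - 1) = Fintype.card Ff - 1 := by rw [hcq, hcf, hN]
  obtain ⟨ψ₀, hψ₀, hχ⟩ := HD.exists_addChar p Fq Ff χ₁ hχ₁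
  have hχ1 : χ₁ ≠ 1 := by
    intro h
    apply hψ₀
    ext t
    obtain ⟨x, rfl⟩ := Algebra.trace_surjective Fq Ff t
    rw [← hχ, h]; rfl
  have hm : Module.finrank Ff Fk = k / f := by
    have h := Module.card_eq_pow_finrank (K := Ff) (V := Fk)
    rw [hck, hcf, ← pow_mul] at h
    have := Nat.pow_right_injective hq1 h
    rw [this, Nat.mul_div_cancel_left _ (by omega)]
  have hm0 : 0 < k / f := hm ▸ Module.finrank_pos
  have hw := HD.weight_eq (Ff := Ff) ψ₀ hψ₀ b
  have hD := HD.sum_ind (Fk := Fk) N hN0 hN' φ hφ χ₁ hχ1 ψ₀ hψ₀ hχ 1 b hb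
  have hS := HD.sum_ind (Fk := Fk) N hN0 hN' φ hφ χ₁ hχ1 ψ₀ hψ₀ hχ χ₁ b hb
  rw [hm, HD.sum_flip N φ hφ χ₁ hχ1 _ hm0] at hS
  have hsum0 : ∑ d : Fk, χ₁ (Algebra.trace Ff Fk d) = 0 := by
    have := AddChar.sum_eq_zero_of_ne_one
      (ψ := χ₁.compAddMonoidHom (Algebra.trace Ff Fk).toAddMonoidHom) ?_
    · exact this
    intro h
    apply hχ1
    ext t
    obtain ⟨x, rfl⟩ := Algebra.trace_surjective Ff Fk t
    exact DFunLike.congr_fun h x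
  have hz : ∀ d : Fk, ψ₀ (Algebra.trace Fq Fk (b * d)) = χ₁ (Algebra.trace Ff Fk (b * d)) := by
    intro d
    rw [hχ, Algebra.trace_trace]
  simp_rw [hz] at hw
  rw [hsum0] at hS
  rw [Finset.sum_eq_zero (s := Finset.Icc 1 (N - 1))] at hD
  swap
  · intro j hj
    rw [gaussSum_one_right, zero_pow (hm ▸ hm0.ne')]
    · simp
    · intro h
      rw [Finset.mem_Icc] at hj
      rw [inv_eq_one, ← orderOf_dvd_iff_pow_eq_one, hφ] at h
      have := Nat.le_of_dvd hj.1 h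
      omega
  simp only [AddChar.one_apply, mul_one, Finset.sum_const, Finset.card_univ, nsmul_eq_mul,
    hck, hcq, hcf, add_zero] at hD hS hw
  push_cast at hD hS hw
  have hNc : (N : ℂ) * ((q : ℂ) - 1) = (q : ℂ) ^ f - 1 := by
    have := congrArg (Nat.cast : ℕ → ℂ) hN
    rw [Nat.cast_mul, Nat.cast_sub hq1.le, Nat.cast_sub hQ1.le] at this
    simpa using this
  have hq0 : (q : ℂ) ≠ 0 := by exact_mod_cast (by omega : q ≠ 0)
  have hQ0 : (q : ℂ) ^ f - 1 ≠ 0 := by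
    rw [sub_ne_zero]; exact_mod_cast hQ1.ne'
  have hN0' : (N : ℂ) ≠ 0 := by exact_mod_cast hN0.ne'
  have hk2 : (q : ℂ) ^ k = (q : ℂ) ^ (k - 2) * q ^ 2 := by
    rw [← pow_add]; congr 1; omega
  rw [hk2] at hD
  generalize (∑ j ∈ Finset.Icc 1 (N - 1), (φ ^ j) (-1) * gaussSum (φ ^ j) χ₁ ^ (k / f - 1) *
              (starRingEnd ℂ) ((φ ^ j) (Algebra.norm Ff b))) = T at *
  generalize (∑ d : Fk, HD.ind Fq Ff d * χ₁ (Algebra.trace Ff Fk (b * d))) = Sg at *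
  generalize (∑ d : Fk, HD.ind Fq Ff d) = D at *
  generalize ((-1 : ℂ) ^ (k / f - 1)) = s at *
  generalize (q : ℂ) ^ (k - 2) = r at *
  generalize (Nat.card {d : Fk // (d ≠ 0 ∧ Algebra.trace Fq Ff (Algebra.norm Ff d) = 0) ∧
        Algebra.trace Fq Fk (b * d) ≠ 0} : ℂ) = w at *
  generalize (q : ℂ) ^ f = Q at *
  have hfin : w * (q ^ 2 * (Q - 1)) =
      (q - 1) * r * (Q - q) * q ^ 2 - s * Q * (q - 1) ^ 2 * T := by
    rw [← hNc]
    have hQe : Q = N * (q - 1) + 1 := by rw [hNc]; ring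
    linear_combination (q : ℂ) * N * (q - 1) * hw + (q - 1) ^ 2 * hD - (q - 1) ^ 2 * hS - ((q:ℂ) - 1) * r * q^2 * (hQe)
  rw [div_mul_eq_mul_div, div_sub_div _ _ hQ0 (mul_ne_zero (pow_ne_zero 2 hq0) hQ0), eq_div_iff
    (mul_ne_zero hQ0 (mul_ne_zero (pow_ne_zero 2 hq0) hQ0))]
  linear_combination (Q - 1) * hfin
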